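/- arXiv:0712.1725 — 2 statements merged into one kernel-verified Lean document; each statement's English description precedes it below -/
import Mathlib

section
/- Let k be a field containing a primitive m-th root of unity (so the characteristic of k does not divide m), let m be an even positive integer and r a positive integer. Let W = G(m,2,r) ⊆ GL(r,k) be the group of r×r monomial matrices whose nonzero entries are m-th roots of unity and the product of whose nonzero entries is an (m/2)-th root of unity, acting on k[x₁,…,x_r] by linear substitutions. Then the invariant algebra k[x₁,…,x_r]^W equals the k-subalgebra generated by the r polynomials e_1(x₁^m,…,x_r^m), …, e_{r−1}(x₁^m,…,x_r^m) and (x₁⋯x_r)^{m/2}, where e_j is the j-th elementary symmetric polynomial; moreover these r generators are algebraically independent over k, so the invariant algebra is a polynomial ring in r variables. -/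
/-- The group `G(m,q,r)` of `r×r` monomial matrices whose nonzero entries are
`m`-th roots of unity and the product of whose nonzero entries is an
`(m/q)`-th root of unity, as a set of matrices. -/
def GmqrSet (k : Type*) [Field k] (m q r : ℕ) : Set (Matrix (Fin r) (Fin r) k) :=
  {w | ∃ σ : Equiv.Perm (Fin r),
    (∀ i j, i ≠ σ j → w i j = 0) ∧
    (∀ j, w (σ j) j ^ m = 1) ∧
    (∏ j, w (σ j) j) ^ (m / q) = 1}

/-- The linear substitution action of a matrix `w` on polynomials:
`x_i ↦ ∑_j w_{ij} x_j`. -/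
noncomputable def substAct {k : Type*} [Field k] {r : ℕ}
    (w : Matrix (Fin r) (Fin r) k) :
    MvPolynomial (Fin r) k →ₐ[k] MvPolynomial (Fin r) k :=
  MvPolynomial.aeval fun i => ∑ j : Fin r, MvPolynomial.C (w i j) * MvPolynomial.X j

/-- The polynomial `e_j(x₁^m, …, x_r^m)` — the `j`-th elementary symmetric
polynomial evaluated at the `m`-th powers of the variables. -/
noncomputable def powerEsymm (k : Type*) [Field k] (r m j : ℕ) :
    MvPolynomial (Fin r) k :=
  MvPolynomial.aeval (fun i : Fin r => (MvPolynomial.X i : MvPolynomial (Fin r) k) ^ m)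
    (MvPolynomial.esymm (Fin r) k j)

/-- The generators for the invariants of `G(m,2,r)`:
`e_1(x^m), …, e_{r-1}(x^m)` together with `(x₁⋯x_r)^{m/2}`. -/
noncomputable def gens18 (k : Type*) [Field k] (r m : ℕ) :
    Fin r → MvPolynomial (Fin r) k := fun j =>
  if (j : ℕ) + 1 < r then powerEsymm k r m ((j : ℕ) + 1)
  else (∏ i : Fin r, (MvPolynomial.X i : MvPolynomial (Fin r) k)) ^ (m / 2)

/- The diagonal matrices of `G(m,q,r)` force the exponents of each monomial of an invariant to be
congruent modulo `m` to a common multiple of `m/q`, and the permutation matrices force the invariant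
to be symmetric. Splitting it by the residue of the exponents gives symmetric pieces of the form
`(x₁⋯x_r)^c * g(x₁^m, …, x_r^m)` with `m/q ∣ c`; here `g` is symmetric, so the fundamental theorem
of symmetric polynomials applies, `e_r(x₁^m, …, x_r^m)` being the `q`-th power of
`(x₁⋯x_r)^{m/q}`. For the same reason the algebra generated by the `r` given polynomials contains
the `r` algebraically independent polynomials `e_j(x₁^m, …, x_r^m)`, so its transcendence degree
is at least `r` and there is no relation between the generators. -/

open MvPolynomial

theorem algebraicIndependent_of_forall_mem_adjoin {ι R A : Type*} [Finite ι] [CommRing R]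
    [CommRing A] [NoZeroDivisors A] [Algebra R A] {x y : ι → A} (hx : AlgebraicIndependent R x)
    (hxy : ∀ i, x i ∈ Algebra.adjoin R (Set.range y)) : AlgebraicIndependent R y := by
  nontriviality R using AlgebraicIndependent.of_subsingleton
  let B := Algebra.adjoin R (Set.range y)
  let x' : ι → B := fun i ↦ ⟨x i, hxy i⟩
  let y' : ι → B := fun i ↦ ⟨y i, Algebra.subset_adjoin ⟨i, rfl⟩⟩
  have hx' : AlgebraicIndependent R x' := .of_comp B.val hx
  have hy' : Algebra.adjoin R (Set.range y') = ⊤ := by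
    rw [← Algebra.adjoin_adjoin_coe_preimage (R := R) (s := Set.range y)]
    congr 1
    ext b
    simp [y', Subtype.ext_iff]
  have : FaithfulSMul R B := (faithfulSMul_iff_algebraMap_injective R B).2 hx'.algebraMap_injective
  have : Nontrivial B := hx'.algebraMap_injective.nontrivial
  have : Algebra.IsAlgebraic (Algebra.adjoin R (Set.range y')) B :=
    ⟨fun b ↦ isAlgebraic_algebraMap (⟨b, hy' ▸ Algebra.mem_top⟩ : Algebra.adjoin R (Set.range y'))⟩
  have hy'_basis : IsTranscendenceBasis R y' :=
    Algebra.IsAlgebraic.isTranscendenceBasis_of_lift_le_trdeg_of_finite R y'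
      hx'.lift_cardinalMk_le_trdeg
  exact hy'_basis.1.map' (f := B.val) Subtype.val_injective

section Symmetric

variable {σ R : Type*}

theorem esymm_card [CommSemiring R] [Fintype σ] : esymm σ R (Fintype.card σ) = ∏ i, X i := by
  rw [esymm, ← Finset.card_univ, Finset.powersetCard_self, Finset.sum_singleton]

theorem algebraicIndependent_esymm [CommRing R] [Fintype σ] {n : ℕ} (hn : n ≤ Fintype.card σ) :
    AlgebraicIndependent R fun i : Fin n ↦ esymm σ R (i + 1) := by
  have hX := (algebraicIndependent_X (Fin n) R).map' (esymmAlgHom_injective R hn)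
  convert hX.map' (f := (symmetricSubalgebra σ R).val) Subtype.val_injective using 2 with i
  simp [esymmAlgHom]

theorem mem_adjoin_esymm_of_isSymmetric [CommRing R] [Fintype σ] {n : ℕ}
    (hn : Fintype.card σ ≤ n) {f : MvPolynomial σ R} (hf : f.IsSymmetric) :
    f ∈ Algebra.adjoin R (Set.range fun i : Fin n ↦ esymm σ R (i + 1)) := by
  obtain ⟨p, hp⟩ := esymmAlgHom_surjective R hn ⟨f, hf⟩
  rw [Algebra.adjoin_range_eq_range_aeval]
  exact ⟨p, (esymmAlgHom_apply p).symm.trans (congrArg Subtype.val hp)⟩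

theorem isSymmetric_of_expand [CommSemiring R] {m : ℕ} (hm : 0 < m) {g : MvPolynomial σ R}
    (hg : (expand m g).IsSymmetric) : g.IsSymmetric := fun e ↦
  expand_injective hm (by rw [← rename_expand, hg e])

theorem isSymmetric_of_prod_X_pow_mul [CommSemiring R] [Fintype σ] {c : ℕ} {g : MvPolynomial σ R}
    (hg : ((∏ i, X i) ^ c * g).IsSymmetric) : g.IsSymmetric := fun e ↦ by
  have hP : rename e (∏ i, X i : MvPolynomial σ R) = ∏ i, X i := by
    simpa only [map_prod, rename_X] using Equiv.prod_comp e (X : σ → MvPolynomial σ R)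
  refine ((isRegular_prod_X Finset.univ).pow c).left ?_
  simpa only [map_mul, map_pow, hP] using hg e

theorem isSymmetric_weightedHomogeneousComponent [CommSemiring R] {M : Type*} [AddCommMonoid M]
    {w : σ → M} {ν : M} {f : MvPolynomial σ R} (hf : f.IsSymmetric)
    (hν : ∀ (e : Equiv.Perm σ) (d : σ →₀ ℕ),
      Finsupp.weight w (d.mapDomain e) = ν ↔ Finsupp.weight w d = ν) :
    (weightedHomogeneousComponent w ν f).IsSymmetric := fun e ↦ by
  classical
  ext d
  obtain ⟨d, rfl⟩ : ∃ d', d = Finsupp.mapDomain e d' :=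
    ⟨d.mapDomain e.symm, by simp [← Finsupp.mapDomain_comp]⟩
  have hcoeff : coeff (d.mapDomain e) f = coeff d f := by
    rw [← coeff_rename_mapDomain e e.injective f d, hf e]
  simp only [coeff_rename_mapDomain _ e.injective, coeff_weightedHomogeneousComponent, hν, hcoeff]

end Symmetric

section Residue

variable {σ R : Type*} [CommSemiring R]

/-- The weight recording exponent vectors modulo `m`: the weighted homogeneous components for it
are the parts of a polynomial whose exponents lie in a given residue class coordinatewise. -/
def residueWeight (σ : Type*) [DecidableEq σ] (m : ℕ) : σ → σ → ZMod m := fun i ↦ Pi.single i 1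

theorem weight_residueWeight [DecidableEq σ] (m : ℕ) (d : σ →₀ ℕ) (i : σ) :
    Finsupp.weight (residueWeight σ m) d i = d i := by
  rw [Finsupp.weight_apply, Finsupp.sum, Finset.sum_apply]
  simp +contextual [residueWeight, Pi.single_apply]

theorem exists_eq_prod_X_pow_mul_expand [Fintype σ] {m c : ℕ} {φ : MvPolynomial σ R}
    (hφ : ∀ d ∈ φ.support, ∀ i, d i % m = c) :
    ∃ g : MvPolynomial σ R, φ = (∏ i, X i) ^ c * expand m g := by
  let L : MvPolynomial σ R →ₗ[R] MvPolynomial σ R :=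
    LinearMap.mulLeft R ((∏ i, X i) ^ c) ∘ₗ (expand m).toLinearMap
  suffices h : φ ∈ LinearMap.range L from h.imp fun _ ↦ Eq.symm
  rw [φ.as_sum]
  refine Submodule.sum_mem _ fun d hd ↦
    ⟨monomial (d.mapRange (· / m) (Nat.zero_div m)) (coeff d φ), ?_⟩
  have hd_eq : d = Finsupp.equivFunOnFinite.symm (fun _ ↦ c) +
      m • d.mapRange (· / m) (Nat.zero_div m) := by
    ext i
    simpa [hφ d hd i] using (Nat.mod_add_div (d i) m).symm
  have hP : (∏ i, X i : MvPolynomial σ R) ^ c =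
      monomial (Finsupp.equivFunOnFinite.symm fun _ ↦ c) 1 := by
    simp [monomial_eq, Finsupp.prod_fintype, Finset.prod_pow]
  simp only [L, LinearMap.comp_apply, AlgHom.toLinearMap_apply, LinearMap.mulLeft_apply,
    expand_monomial, hP]
  rw [monomial_mul, one_mul, ← hd_eq]

theorem mem_of_isSymmetric_of_modEq [Fintype σ] {m n : ℕ} (hm : 0 < m) (hnm : n ∣ m)
    {S : Subalgebra R (MvPolynomial σ R)} (hP : (∏ i, X i) ^ n ∈ S)
    (hS : ∀ g : MvPolynomial σ R, g.IsSymmetric → expand m g ∈ S)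
    {f : MvPolynomial σ R} (hf : f.IsSymmetric)
    (hsupp : ∀ d ∈ f.support, ∃ c, n ∣ c ∧ ∀ i, d i ≡ c [MOD m]) : f ∈ S := by
  classical
  rw [← sum_weightedHomogeneousComponent (residueWeight σ m) f]
  refine finsum_induction (· ∈ S) S.zero_mem (fun _ _ ↦ S.add_mem) fun ν ↦ ?_
  set φ := weightedHomogeneousComponent (residueWeight σ m) ν f with hφ
  obtain hφ0 | ⟨d₀, hd₀⟩ := φ.support.eq_empty_or_nonempty
  · rw [support_eq_empty.1 hφ0]
    exact S.zero_mem
  simp only [hφ, support_weightedHomogeneousComponent, Finset.mem_filter] at hd₀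
  obtain ⟨c, hnc, hc⟩ := hsupp d₀ hd₀.1
  have hν : ∀ d : σ →₀ ℕ, Finsupp.weight (residueWeight σ m) d = ν ↔ ∀ i, d i ≡ c [MOD m] := by
    intro d
    simp only [← hd₀.2, funext_iff, weight_residueWeight, ZMod.natCast_eq_natCast_iff]
    exact forall_congr' fun i ↦ ⟨(·.trans (hc i)), (·.trans (hc i).symm)⟩
  have hφ_symm : φ.IsSymmetric := isSymmetric_weightedHomogeneousComponent hf fun e d ↦ by
    rw [hν, hν, ← e.forall_congr_right]
    simp only [Finsupp.mapDomain_apply e.injective]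
  obtain ⟨g, hg⟩ : ∃ g, φ = (∏ i, X i) ^ (c % m) * expand m g :=
    exists_eq_prod_X_pow_mul_expand fun d hd ↦ by
      simp only [hφ, support_weightedHomogeneousComponent, Finset.mem_filter] at hd
      exact (hν d).1 hd.2
  obtain ⟨a, ha⟩ : n ∣ c % m := (Nat.dvd_mod_iff hnm).2 hnc
  have hg_symm : g.IsSymmetric :=
    isSymmetric_of_expand hm (isSymmetric_of_prod_X_pow_mul (hg ▸ hφ_symm))
  rw [hg, ha, pow_mul]
  exact S.mul_mem (S.pow_mem hP a) (hS g hg_symm)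

end Residue

section MulSingle

variable {ι M : Type*} [CommMonoid M] [DecidableEq ι]

theorem mulSingle_pow_eq_one (i : ι) {x : M} {m : ℕ} (hx : x ^ m = 1) (l : ι) :
    (Pi.mulSingle i x : ι → M) l ^ m = 1 := by
  rw [← Pi.pow_apply, ← Pi.mulSingle_pow, hx, Pi.mulSingle_one, Pi.one_apply]

theorem prod_mulSingle_pow [Fintype ι] (i : ι) (x : M) (d : ι → ℕ) :
    ∏ l, (Pi.mulSingle i x : ι → M) l ^ d l = x ^ d i := by
  simp [Pi.mulSingle_apply, ite_pow]

end MulSingle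

section Action

variable {k : Type*} [Field k] {r : ℕ}

theorem substAct_X_of_monomial {w : Matrix (Fin r) (Fin r) k} {σ : Equiv.Perm (Fin r)}
    (hw : ∀ i j, i ≠ σ j → w i j = 0) (j : Fin r) :
    substAct w (X (σ j)) = C (w (σ j) j) * X j := by
  rw [substAct, aeval_X]
  refine Fintype.sum_eq_single j fun i hij ↦ ?_
  rw [hw _ _ fun h ↦ hij (σ.injective h).symm, C_0, zero_mul]

theorem substAct_permMatrix (σ : Equiv.Perm (Fin r)) :
    substAct (σ.permMatrix k) = rename σ := by
  ext1 i
  simp [substAct, PEquiv.toMatrix_apply]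

theorem coeff_substAct_diagonal (t : Fin r → k) (f : MvPolynomial (Fin r) k) (d : Fin r →₀ ℕ) :
    coeff d (substAct (Matrix.diagonal t) f) = (∏ i, t i ^ d i) * coeff d f := by
  have hX : ∀ i, substAct (Matrix.diagonal t) (X i) = C (t i) * X i := fun i ↦ by
    simpa using substAct_X_of_monomial (σ := 1) (fun _ _ h ↦ Matrix.diagonal_apply_ne t h) i
  induction f using MvPolynomial.induction_on' with
  | add p q hp hq => rw [map_add, coeff_add, hp, hq, coeff_add, mul_add]
  | monomial e a =>
    have hmonomial : substAct (Matrix.diagonal t) (monomial e a) =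
        C (∏ i, t i ^ e i) * monomial e a := by
      simp only [monomial_eq, Finsupp.prod_fintype, pow_zero, implies_true, map_mul, map_prod,
        map_pow, hX, mul_pow, Finset.prod_mul_distrib, algHom_C, algebraMap_eq]
      ring
    rw [hmonomial, coeff_C_mul, coeff_monomial]
    split_ifs with h
    · rw [h]
    · rw [mul_zero, mul_zero]

end Action

section Gmqr

variable {k : Type*} [Field k] {m q r : ℕ}

theorem permMatrix_mem_GmqrSet (m q : ℕ) (σ : Equiv.Perm (Fin r)) :
    σ.permMatrix k ∈ GmqrSet k m q r := by
  refine ⟨σ⁻¹, fun i j hij ↦ ?_, ?_, ?_⟩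
  · simp [PEquiv.toMatrix_apply, show σ i ≠ j from fun h ↦ hij (by simp [← h])]
  · simp [PEquiv.toMatrix_apply]
  · simp [PEquiv.toMatrix_apply]

theorem diagonal_mem_GmqrSet {t : Fin r → k} (ht : ∀ i, t i ^ m = 1)
    (hprod : (∏ i, t i) ^ (m / q) = 1) : Matrix.diagonal t ∈ GmqrSet k m q r :=
  ⟨1, fun _ _ h ↦ Matrix.diagonal_apply_ne t h, by simpa using ht, by simpa using hprod⟩

variable {f : MvPolynomial (Fin r) k}

theorem isSymmetric_of_invariant (hf : ∀ w ∈ GmqrSet k m q r, substAct w f = f) :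
    f.IsSymmetric := fun σ ↦ by
  rw [← substAct_permMatrix, hf _ (permMatrix_mem_GmqrSet m q σ)]

theorem prod_pow_eq_one_of_invariant (hf : ∀ w ∈ GmqrSet k m q r, substAct w f = f)
    {d : Fin r →₀ ℕ} (hd : d ∈ f.support) {t : Fin r → k} (ht : ∀ i, t i ^ m = 1)
    (hprod : (∏ i, t i) ^ (m / q) = 1) : ∏ i, t i ^ d i = 1 := by
  have h := coeff_substAct_diagonal t f d
  rw [hf _ (diagonal_mem_GmqrSet ht hprod)] at h
  exact (right_eq_mul₀ (mem_support_iff.1 hd)).1 h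

theorem dvd_exponent_of_invariant {ζ : k} (hζ : IsPrimitiveRoot ζ m) (hm : 0 < m) (hq : q ∣ m)
    (hf : ∀ w ∈ GmqrSet k m q r, substAct w f = f) {d : Fin r →₀ ℕ} (hd : d ∈ f.support)
    (i : Fin r) : m / q ∣ d i := by
  have hζq : (ζ ^ q) ^ m = 1 := by rw [pow_right_comm, hζ.pow_eq_one, one_pow]
  have h := prod_pow_eq_one_of_invariant hf hd (mulSingle_pow_eq_one i hζq) <| by
    rw [Fintype.prod_pi_mulSingle', ← pow_mul, Nat.mul_div_cancel' hq, hζ.pow_eq_one]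
  rw [prod_mulSingle_pow, ← pow_mul, hζ.pow_eq_one_iff_dvd] at h
  exact (Nat.div_dvd_iff_dvd_mul hq (Nat.pos_of_dvd_of_pos hq hm)).2 h

theorem exponent_modEq_of_invariant {ζ : k} (hζ : IsPrimitiveRoot ζ m) (hm : 0 < m)
    (hf : ∀ w ∈ GmqrSet k m q r, substAct w f = f) {d : Fin r →₀ ℕ} (hd : d ∈ f.support)
    (i j : Fin r) : d i ≡ d j [MOD m] := by
  have hζ₀ : ζ ≠ 0 := hζ.ne_zero hm.ne'
  have hζ_inv : ζ⁻¹ ^ m = 1 := by rw [inv_pow, hζ.pow_eq_one, inv_one]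
  have h := prod_pow_eq_one_of_invariant hf hd
    (t := fun l ↦ Pi.mulSingle (M := fun _ ↦ k) i ζ l * Pi.mulSingle (M := fun _ ↦ k) j ζ⁻¹ l)
    (fun l ↦ by
      rw [mul_pow, mulSingle_pow_eq_one i hζ.pow_eq_one, mulSingle_pow_eq_one j hζ_inv, one_mul])
    (by rw [Finset.prod_mul_distrib, Fintype.prod_pi_mulSingle', Fintype.prod_pi_mulSingle',
      mul_inv_cancel₀ hζ₀, one_pow])
  simp only [mul_pow, Finset.prod_mul_distrib, prod_mulSingle_pow] at h
  have hzpow : ζ ^ ((d i : ℤ) - d j) = 1 := by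
    rw [zpow_sub₀ hζ₀, div_eq_mul_inv, zpow_natCast, zpow_natCast, ← inv_pow, h]
  exact (Nat.modEq_iff_dvd.2 ((hζ.zpow_eq_one_iff_dvd _).1 hzpow)).symm

theorem exists_dvd_forall_modEq_of_invariant {ζ : k} (hζ : IsPrimitiveRoot ζ m) (hm : 0 < m)
    (hq : q ∣ m) (hf : ∀ w ∈ GmqrSet k m q r, substAct w f = f) {d : Fin r →₀ ℕ}
    (hd : d ∈ f.support) : ∃ c, m / q ∣ c ∧ ∀ i, d i ≡ c [MOD m] := by
  obtain hr | ⟨⟨i₀⟩⟩ := isEmpty_or_nonempty (Fin r)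
  · exact ⟨0, dvd_zero _, isEmptyElim⟩
  · exact ⟨d i₀, dvd_exponent_of_invariant hζ hm hq hf hd i₀,
      fun i ↦ exponent_modEq_of_invariant hζ hm hf hd i i₀⟩

end Gmqr

section Generators

variable {k : Type*} [Field k] {m q r : ℕ}

/-- The generators `e_1(x^m), …, e_{r-1}(x^m), (x₁⋯x_r)^{m/q}` of the invariants of `G(m,q,r)`,
indexed from `0`, so that `gens18 k r m` is the case `q = 2`. -/
noncomputable def gmqrGens (k : Type*) [Field k] (m q r : ℕ) :
    Fin r → MvPolynomial (Fin r) k := fun j ↦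
  if (j : ℕ) + 1 < r then powerEsymm k r m (j + 1) else (∏ i, X i) ^ (m / q)

theorem powerEsymm_eq_expand (j : ℕ) : powerEsymm k r m j = expand m (esymm (Fin r) k j) := rfl

theorem powerEsymm_self : powerEsymm k r m r = (∏ i, X i) ^ m := by
  have h := esymm_card (σ := Fin r) (R := k)
  rw [Fintype.card_fin] at h
  rw [powerEsymm_eq_expand, h, map_prod]
  simp only [expand_X, Finset.prod_pow]

theorem prod_X_pow_mem_adjoin_gmqrGens :
    (∏ i, X i) ^ (m / q) ∈ Algebra.adjoin k (Set.range (gmqrGens k m q r)) := by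
  obtain _ | r := r
  · simp
  · exact Algebra.subset_adjoin ⟨Fin.last r, by simp [gmqrGens]⟩

theorem powerEsymm_mem_adjoin_gmqrGens (hq : q ∣ m) (i : Fin r) :
    powerEsymm k r m (i + 1) ∈ Algebra.adjoin k (Set.range (gmqrGens k m q r)) := by
  obtain hi | hi : (i : ℕ) + 1 < r ∨ (i : ℕ) + 1 = r := lt_or_eq_of_le i.is_lt
  · exact Algebra.subset_adjoin ⟨i, if_pos hi⟩
  · have hpow : ((∏ i, X i : MvPolynomial (Fin r) k) ^ (m / q)) ^ q = (∏ i, X i) ^ m := by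
      rw [← pow_mul, Nat.div_mul_cancel hq]
    rw [hi, powerEsymm_self, ← hpow]
    exact pow_mem prod_X_pow_mem_adjoin_gmqrGens q

theorem expand_mem_adjoin_gmqrGens (hq : q ∣ m) {g : MvPolynomial (Fin r) k}
    (hg : g.IsSymmetric) : expand m g ∈ Algebra.adjoin k (Set.range (gmqrGens k m q r)) := by
  have hle : Algebra.adjoin k (Set.range fun i : Fin r ↦ esymm (Fin r) k (i + 1)) ≤
      (Algebra.adjoin k (Set.range (gmqrGens k m q r))).comap (expand m) :=
    Algebra.adjoin_le <| Set.range_subset_iff.2 <| powerEsymm_mem_adjoin_gmqrGens hq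
  exact hle (mem_adjoin_esymm_of_isSymmetric (Fintype.card_fin r).le hg)

theorem algebraicIndependent_gmqrGens (hm : 0 < m) (hq : q ∣ m) :
    AlgebraicIndependent k (gmqrGens k m q r) := by
  have hpow : AlgebraicIndependent k fun i : Fin r ↦ powerEsymm k r m (i + 1) :=
    (algebraicIndependent_esymm (Fintype.card_fin r).ge).map' (expand_injective hm)
  exact algebraicIndependent_of_forall_mem_adjoin hpow (powerEsymm_mem_adjoin_gmqrGens hq)

theorem substAct_expand {w : Matrix (Fin r) (Fin r) k} {σ : Equiv.Perm (Fin r)}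
    (hw : ∀ i j, i ≠ σ j → w i j = 0) (hpow : ∀ j, w (σ j) j ^ m = 1)
    (g : MvPolynomial (Fin r) k) : substAct w (expand m g) = expand m (rename σ.symm g) := by
  suffices h : (substAct w).comp (expand m) = (expand m).comp (rename σ.symm) from
    DFunLike.congr_fun h g
  ext1 i
  obtain ⟨j, rfl⟩ := σ.surjective i
  simp [substAct_X_of_monomial hw, mul_pow, ← C_pow, hpow]

theorem substAct_gmqrGens {w : Matrix (Fin r) (Fin r) k} (hw : w ∈ GmqrSet k m q r) (i : Fin r) :
    substAct w (gmqrGens k m q r i) = gmqrGens k m q r i := by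
  obtain ⟨σ, hzero, hpow, hprod⟩ := hw
  rw [gmqrGens]
  split_ifs
  · rw [powerEsymm_eq_expand, substAct_expand hzero hpow, esymm_isSymmetric (Fin r) k _ σ.symm]
  · rw [map_pow, map_prod, ← Equiv.prod_comp σ]
    simp only [substAct_X_of_monomial hzero]
    rw [Finset.prod_mul_distrib, mul_pow, ← map_prod, ← C_pow, hprod, C_1, one_mul]

end Generators

theorem stmt18_general {k : Type*} [Field k] {m q r : ℕ} (hm : 0 < m) (hq : q ∣ m)
    (hprim : ∃ ζ : k, IsPrimitiveRoot ζ m) :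
    {f : MvPolynomial (Fin r) k | ∀ w ∈ GmqrSet k m q r, substAct w f = f} =
      ↑(Algebra.adjoin k (Set.range (gmqrGens k m q r))) ∧
    AlgebraicIndependent k (gmqrGens k m q r) := by
  obtain ⟨ζ, hζ⟩ := hprim
  refine ⟨Set.Subset.antisymm (fun f hf ↦ ?_) fun f hf w hw ↦ ?_,
    algebraicIndependent_gmqrGens hm hq⟩
  · exact mem_of_isSymmetric_of_modEq hm (Nat.div_dvd_of_dvd hq) prod_X_pow_mem_adjoin_gmqrGens
      (fun _ ↦ expand_mem_adjoin_gmqrGens hq) (isSymmetric_of_invariant hf)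
      fun _ ↦ exists_dvd_forall_modEq_of_invariant hζ hm hq hf
  · have hle : Algebra.adjoin k (Set.range (gmqrGens k m q r)) ≤
        AlgHom.equalizer (substAct w) (AlgHom.id k _) :=
      Algebra.adjoin_le <| Set.range_subset_iff.2 <| substAct_gmqrGens hw
    exact hle hf

/-- for even `m`, the invariants of `G(m,2,r)` acting on
`k[x₁,…,x_r]` by linear substitutions form the subalgebra generated by
`e_1(x₁^m,…,x_r^m), …, e_{r-1}(x₁^m,…,x_r^m)` and `(x₁⋯x_r)^{m/2}`, and these
generators are algebraically independent. -/
theorem stmt18 {k : Type*} [Field k] (m r : ℕ) (hm : 0 < m) (hmeven : Even m)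
    (hr : 0 < r) (hprim : ∃ ζ : k, IsPrimitiveRoot ζ m) :
    {f : MvPolynomial (Fin r) k | ∀ w ∈ GmqrSet k m 2 r, substAct w f = f} =
      ↑(Algebra.adjoin k (Set.range (gens18 k r m))) ∧
    AlgebraicIndependent k (gens18 k r m) :=
  stmt18_general hm hmeven.two_dvd hprim
end

section
/- Let k be an algebraically closed field, m a positive integer, ζ ∈ k a primitive m-th root of unity, and g ∈ GL(n,k) a matrix such that g^m is a scalar matrix. Set 𝔤(1) = {x ∈ Mₙ(k) : g·x·g⁻¹ = ζ·x} and H = {h ∈ GL(n,k) : h·g = g·h}. Then any two Cartan subspaces of 𝔤(1) are conjugate by an element of H: if c₁ and c₂ are both subspaces of 𝔤(1) maximal among subspaces consisting of pairwise commuting diagonalizable matrices, then there exists h ∈ H with h·c₁·h⁻¹ = c₂. -/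
/-- A matrix is semisimple if it is diagonalizable. -/
def IsSemisimpleMat {k : Type*} [Field k] {N : Type*} [Fintype N] [DecidableEq N]
    (x : Matrix N N k) : Prop :=
  ∃ P : Matrix N N k, IsUnit P.det ∧ (P * x * P⁻¹).IsDiag

/-- `c` is a Cartan subspace of `g1`: a subspace of `g1`, consisting of
pairwise commuting diagonalizable matrices, and maximal among such. -/
def IsCartanSubspace {k : Type*} [Field k] {N : Type*} [Fintype N] [DecidableEq N]
    (g1 : Set (Matrix N N k)) (c : Submodule k (Matrix N N k)) : Prop :=
  (c : Set (Matrix N N k)) ⊆ g1 ∧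
  (∀ x ∈ c, ∀ y ∈ c, x * y = y * x) ∧
  (∀ x ∈ c, IsSemisimpleMat x) ∧
  ∀ c' : Submodule k (Matrix N N k),
    ((c' : Set (Matrix N N k)) ⊆ g1 ∧ (∀ x ∈ c', ∀ y ∈ c', x * y = y * x) ∧
      (∀ x ∈ c', IsSemisimpleMat x)) → c ≤ c' → c' = c

/-!
Decompose `V` into the weight spaces of a toral subspace `c`. Since `g x g⁻¹ = ζ x` on `c`, the map
`g` sends weight `χ` to weight `ζ⁻¹ χ`, so it permutes the nonzero weights in free cycles of length
`m` and preserves the zero weight space. Hence averaging over the powers of `g` is injective on the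
sum of one weight space from each cycle: a basis of weight vectors of this sum projects to
independent vectors in every eigenspace of `g`, which zero weight vectors complete to a basis. In
such a frame every `x ∈ c` maps the `j`-th vector of the `μ`-eigenspace to a multiple, independent
of `μ`, of the `j`-th vector of the `ζ μ`-eigenspace. The endomorphisms of this shape form a toral
subspace themselves, so the Cartan subspaces are exactly those attached to frames, and matching two
frames gives a conjugating element that commutes with `g`.
-/

open Module

section LinearAlgebra

variable {k M : Type*} [Field k] [AddCommGroup M] [Module k M] [FiniteDimensional k M]

theorem exists_basis_fin_castLE_eq_and_mem {q : ℕ} {v : Fin q → M} (hv : LinearIndependent k v)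
    {s : Set M} (hs : Submodule.span k (Set.range v ∪ s) = ⊤) :
    ∃ (hq : q ≤ finrank k M) (b : Basis (Fin (finrank k M)) k M),
      (∀ i, b (Fin.castLE hq i) = v i) ∧ ∀ j : Fin (finrank k M), q ≤ j → b j ∈ s := by
  classical
  have hq : q ≤ finrank k M := by simpa using hv.fintype_card_le_finrank
  let B := Basis.extendLe hv.linearIndepOn_id Set.subset_union_left hs.ge
  let T := hv.linearIndepOn_id.extend (Set.subset_union_left (t := s))
  have : Fintype T := FiniteDimensional.fintypeBasisIndex B
  let w (i : Fin (finrank k M)) : M := if h : (i : ℕ) < q then v ⟨i, h⟩ else 0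
  have w_of_lt {i : Fin (finrank k M)} (h : (i : ℕ) < q) : w i = v ⟨i, h⟩ := dif_pos h
  have maps : Set.MapsTo w {i | (i : ℕ) < q} T.toFinset := fun i hi => by
    rw [w_of_lt hi, Set.coe_toFinset]
    exact LinearIndepOn.subset_extend _ _ (Set.mem_range_self _)
  have inj : Set.InjOn w {i | (i : ℕ) < q} := fun i hi j hj hij => by
    rw [w_of_lt hi, w_of_lt hj] at hij
    exact Fin.ext (Fin.mk.inj_iff.mp (hv.injective hij))
  have card : Fintype.card (Fin (finrank k M)) = T.toFinset.card := by
    rw [Fintype.card_fin, Set.toFinset_card, finrank_eq_card_basis B]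
  obtain ⟨e, he⟩ := maps.exists_equiv_extend_of_card_eq card inj
  let b := B.reindex (e.trans (Equiv.subtypeEquivRight fun _ => Set.mem_toFinset)).symm
  have b_eq (j) : b j = e j := by simp [b, B]
  have b_castLE (i : Fin q) : b (Fin.castLE hq i) = v i := by
    rw [b_eq, he _ i.isLt, w_of_lt i.isLt]; rfl
  refine ⟨hq, b, b_castLE, fun j hj => ?_⟩
  have hbj : b j ∈ Set.range v ∪ s :=
    LinearIndepOn.extend_subset _ _ (b_eq j ▸ Set.mem_toFinset.mp (e j).2)
  refine hbj.resolve_left ?_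
  rintro ⟨i, hi⟩
  rw [← b_castLE] at hi
  exact hj.not_gt (b.injective hi ▸ i.isLt)

end LinearAlgebra

section OrbitRepresentatives

variable {k M : Type*} [Field k] [AddCommGroup M] [Module k M]

theorem exists_orbit_representatives_pow_smul {m : ℕ} [NeZero m] {ζ : k}
    (hζ : IsPrimitiveRoot ζ m) :
    ∃ R : Set M, (∀ χ, ∃ l : ℕ, ζ ^ l • χ ∈ R) ∧
      ∀ χ ∈ R, χ ≠ 0 → ∀ l, 0 < l → l < m → ζ ^ l • χ ∉ R := by
  let rep (χ : M) : M := (Quotient.mk (MulAction.orbitRel (rootsOfUnity m k) M) χ).out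
  have rep_eq {χ ψ : M} (h : χ ∈ MulAction.orbit (rootsOfUnity m k) ψ) : rep χ = rep ψ :=
    congrArg Quotient.out (Quotient.sound h)
  have rep_mem (χ : M) : rep χ ∈ MulAction.orbit (rootsOfUnity m k) χ :=
    Quotient.mk_out (s := MulAction.orbitRel (rootsOfUnity m k) M) χ
  refine ⟨Set.range rep, fun χ => ?_, ?_⟩
  · obtain ⟨ξ, hξ⟩ := rep_mem χ
    obtain ⟨l, -, hl⟩ := hζ.eq_pow_of_pow_eq_one ((mem_rootsOfUnity' m ξ.1).mp ξ.2)
    exact ⟨l, χ, by rw [hl, ← hξ]; rfl⟩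
  · rintro _ ⟨χ, rfl⟩ hχ l hl hlm ⟨ψ, hψ⟩
    have h_orbit : rep ψ ∈ MulAction.orbit (rootsOfUnity m k) (rep χ) :=
      ⟨hζ.toRootsOfUnity ^ l, by rw [hψ]; simp [Subgroup.smul_def, Units.smul_def]⟩
    have h_fixed : ζ ^ l • rep χ = (1 : k) • rep χ := by
      rw [← hψ, one_smul, ← rep_eq (rep_mem ψ), rep_eq h_orbit, rep_eq (rep_mem χ)]
    exact hζ.pow_ne_one_of_pos_of_lt hl.ne' hlm (smul_left_injective k hχ h_fixed)

end OrbitRepresentatives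

section EigenProj

variable {k V : Type*} [Field k] [AddCommGroup V] [Module k V]

theorem pow_apply_of_mem_eigenspace {g : End k V} {μ : k} {v : V} (hv : v ∈ g.eigenspace μ)
    (l : ℕ) : (g ^ l) v = μ ^ l • v := by
  induction l with
  | zero => simp
  | succ l ih =>
    rw [pow_succ, End.mul_apply, End.mem_eigenspace_iff.mp hv, map_smul, ih, smul_smul,
      pow_succ']

theorem inv_smul_pow_apply_eq_self {g : End k V} {μ : k} (hμ : μ ≠ 0) {l : ℕ} {v : V}
    (hv : (g ^ l) v = μ ^ l • v) : ((μ⁻¹ • g) ^ l) v = v := by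
  rw [smul_pow, LinearMap.smul_apply, hv, smul_smul, ← mul_pow, inv_mul_cancel₀ hμ, one_pow,
    one_smul]

/-- The average `m⁻¹ ∑_{l < m} μ⁻ˡ gˡ`: the `g`-equivariant projection onto the `μ`-eigenspace of
`g` when `g ^ m` is the scalar `μ ^ m`. Nothing is assumed of `g` and `m` in the definition, so it
is `0` if `m = 0` in `k`. -/
noncomputable def eigenProj (g : End k V) (m : ℕ) (μ : k) : End k V :=
  (m : k)⁻¹ • ∑ l ∈ Finset.range m, (μ⁻¹ • g) ^ l

variable {g : End k V} {m : ℕ} {μ : k}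

theorem eigenProj_apply_of_mem_eigenspace (hm : (m : k) ≠ 0) (hμ : μ ≠ 0) {v : V}
    (hv : v ∈ g.eigenspace μ) : eigenProj g m μ v = v := by
  have fixed (l : ℕ) : ((μ⁻¹ • g) ^ l) v = v :=
    inv_smul_pow_apply_eq_self hμ (pow_apply_of_mem_eigenspace hv l)
  simp [eigenProj, fixed, ← Nat.cast_smul_eq_nsmul k, smul_smul, hm]

theorem eigenProj_apply_mem_eigenspace (hμ : μ ≠ 0) {v : V} (hv : (g ^ m) v = μ ^ m • v) :
    eigenProj g m μ v ∈ g.eigenspace μ := by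
  have telescope : (μ⁻¹ • g) (eigenProj g m μ v) = eigenProj g m μ v := by
    have := LinearMap.congr_fun (mul_geom_sum (μ⁻¹ • g) m) v
    simp only [End.mul_apply, LinearMap.sub_apply,
      inv_smul_pow_apply_eq_self hμ hv, End.one_apply, sub_self, sub_eq_zero] at this
    rw [eigenProj, LinearMap.smul_apply (m : k)⁻¹, map_smul, this]
  rw [End.mem_eigenspace_iff, ← inv_smul_eq_iff₀ hμ]
  exact telescope

theorem eigenProj_pow_apply (hμ : μ ≠ 0) (l : ℕ) {v : V} (hv : (g ^ m) v = μ ^ m • v) :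
    eigenProj g m μ ((g ^ l) v) = μ ^ l • eigenProj g m μ v := by
  have comm : Commute (eigenProj g m μ) g :=
    (Commute.sum_left _ _ _ fun _ _ =>
      ((Commute.refl g).smul_left μ⁻¹).pow_left _).smul_left _
  rw [← pow_apply_of_mem_eigenspace (eigenProj_apply_mem_eigenspace hμ hv)]
  exact LinearMap.congr_fun (comm.pow_right l).eq v

theorem semiconjBy_eigenProj {x : End k V} {ζ : k} (hζ : ζ ≠ 0) (hx : g * x = ζ • (x * g)) (m : ℕ)
    (μ : k) : SemiconjBy x (eigenProj g m μ) (eigenProj g m (ζ * μ)) := by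
  have base : SemiconjBy x (μ⁻¹ • g) ((ζ * μ)⁻¹ • g) := by
    rw [SemiconjBy, smul_mul_assoc, hx, smul_smul, mul_smul_comm]
    congr 1
    field_simp
  rw [SemiconjBy, eigenProj, eigenProj, mul_smul_comm, smul_mul_assoc, Finset.mul_sum,
    Finset.sum_mul]
  exact congrArg _ (Finset.sum_congr rfl fun l _ => (base.pow_right l).eq)

theorem sum_eigenProj_eq_one {ζ : k} [NeZero m] (hζ : IsPrimitiveRoot ζ m) (g : End k V) (μ : k) :
    ∑ i ∈ Finset.range m, eigenProj g m (ζ ^ i * μ) = 1 := by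
  have hm : (m : k) ≠ 0 := hζ.neZero'.out
  have orthogonality (l : ℕ) (hl : l ∈ Finset.range m) :
      ∑ i ∈ Finset.range m, ((ζ ^ i * μ)⁻¹ • g) ^ l = if l = 0 then (m : k) • 1 else 0 := by
    split_ifs with hl0
    · simp [hl0, Nat.cast_smul_eq_nsmul]
    have hne : ζ⁻¹ ^ l - 1 ≠ 0 :=
      sub_ne_zero.mpr (hζ.inv.pow_ne_one_of_pos_of_lt hl0 (Finset.mem_range.mp hl))
    have hsum : ∑ i ∈ Finset.range m, (ζ⁻¹ ^ i) ^ l = 0 := by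
      simp_rw [fun i => pow_right_comm ζ⁻¹ i l]
      refine (mul_eq_zero.mp ?_).resolve_right hne
      rw [geom_sum_mul, pow_right_comm, hζ.inv.pow_eq_one, one_pow, sub_self]
    simp_rw [smul_pow, ← Finset.sum_smul, mul_inv, mul_pow, ← Finset.sum_mul, ← inv_pow, hsum,
      zero_mul, zero_smul]
  simp_rw [eigenProj, ← Finset.smul_sum]
  rw [Finset.sum_comm, Finset.sum_congr rfl orthogonality, Finset.sum_ite_eq',
    if_pos (Finset.mem_range.mpr (NeZero.pos m)), smul_smul, inv_mul_cancel₀ hm, one_smul]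

theorem disjoint_ker_eigenProj (hm : (m : k) ≠ 0) {U U' : Submodule k V} (hUU' : Disjoint U U')
    (hU : ∀ l, 0 < l → l < m → U ≤ U'.comap (g ^ l)) (μ : k) :
    Disjoint U (LinearMap.ker (eigenProj g m μ)) := by
  have hm' : 0 < m := Nat.pos_of_ne_zero fun h => hm (by simp [h])
  refine Submodule.disjoint_def.mpr fun v hv hker => Submodule.disjoint_def.mp hUU' v hv ?_
  have hsum : v + ∑ l ∈ Finset.Ico 1 m, ((μ⁻¹ • g) ^ l) v = 0 := by
    rw [LinearMap.mem_ker, eigenProj, LinearMap.smul_apply, smul_eq_zero_iff_right (inv_ne_zero hm),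
      LinearMap.sum_apply, Finset.range_eq_Ico, Finset.sum_eq_sum_Ico_succ_bot hm'] at hker
    exact hker
  rw [eq_neg_of_add_eq_zero_left hsum]
  refine neg_mem (sum_mem fun l hl => ?_)
  rw [smul_pow]
  exact U'.smul_mem _ (hU l (Finset.mem_Ico.mp hl).1 (Finset.mem_Ico.mp hl).2 hv)

theorem eigenspace_le_map_eigenProj_sup (hm : (m : k) ≠ 0) (hμ : μ ≠ 0)
    (hg : g ^ m = μ ^ m • (1 : End k V)) {U W : Submodule k V} (hW : W ∈ g.invtSubmodule)
    (hUW : (⨆ l, U.comap (g ^ l)) ⊔ W = ⊤) :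
    g.eigenspace μ ≤ U.map (eigenProj g m μ) ⊔ W := by
  have hgv (v : V) : (g ^ m) v = μ ^ m • v := by simp [hg]
  have map_comap_le (l : ℕ) :
      (U.comap (g ^ l)).map (eigenProj g m μ) ≤ U.map (eigenProj g m μ) := by
    rw [Submodule.map_le_iff_le_comap]
    intro v hv
    have := Submodule.mem_map_of_mem (f := eigenProj g m μ) (Submodule.mem_comap.mp hv)
    rw [eigenProj_pow_apply hμ l (hgv v)] at this
    exact (Submodule.smul_mem_iff (U.map (eigenProj g m μ)) (pow_ne_zero l hμ)).mp this
  have map_invariant_le : W.map (eigenProj g m μ) ≤ W := by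
    rw [Submodule.map_le_iff_le_comap]
    intro v hv
    simp only [eigenProj, smul_pow, Submodule.mem_comap, LinearMap.smul_apply,
      LinearMap.sum_apply]
    exact W.smul_mem _ (sum_mem fun l _ =>
      W.smul_mem _ (End.pow_apply_mem_of_forall_mem l hW v hv))
  calc
    g.eigenspace μ ≤ Submodule.map (eigenProj g m μ) ⊤ := fun v hv =>
      ⟨v, trivial, eigenProj_apply_of_mem_eigenspace hm hμ hv⟩
    _ ≤ U.map (eigenProj g m μ) ⊔ W := by
      rw [← hUW, Submodule.map_sup, Submodule.map_iSup]
      exact sup_le_sup (iSup_le map_comap_le) map_invariant_le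

theorem mem_iSup_eigenspace_of_pow_apply_eq {ζ : k} [NeZero m] (hζ : IsPrimitiveRoot ζ m)
    {x : End k V} {t : k} (ht : t ≠ 0) {v : V} (hv : (x ^ m) v = t ^ m • v) :
    v ∈ ⨆ μ, x.eigenspace μ := by
  rw [← End.one_apply (R := k) v, ← sum_eigenProj_eq_one hζ x t, LinearMap.sum_apply]
  refine sum_mem fun i _ => (le_iSup x.eigenspace (ζ ^ i * t)) ?_
  refine eigenProj_apply_mem_eigenspace ?_ ?_
  · exact mul_ne_zero (pow_ne_zero i (hζ.ne_zero (NeZero.ne m))) ht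
  · rw [hv, mul_pow, pow_right_comm, hζ.pow_eq_one, one_pow, one_mul]

end EigenProj

section Toral

variable {k V : Type*} [Field k] [AddCommGroup V] [Module k V]

/-- The joint eigenspace of the endomorphisms in `c` with eigenvalues `χ`, i.e. the weight space of
weight `χ`. Weights are arbitrary functions `c → k`; the weight space of a nonlinear one is `0`. -/
def weightSpace (c : Submodule k (End k V)) (χ : c → k) : Submodule k V :=
  ⨅ y : c, (y : End k V).eigenspace (χ y)

/-- A subspace of commuting diagonalizable endomorphisms of the `ζ`-eigenspace of conjugation by
`g`. The Cartan subspaces are the maximal ones. Diagonalizability means that the eigenspaces span,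
and the eigenvalue equation `g x g⁻¹ = ζ x` is stated without the inverse of `g`. -/
structure IsToralSubspace (g : End k V) (ζ : k) (c : Submodule k (End k V)) : Prop where
  mul_eq_smul_mul : ∀ x ∈ c, g * x = ζ • (x * g)
  commute : ∀ x ∈ c, ∀ y ∈ c, Commute x y
  iSup_eigenspace_eq_top : ∀ x ∈ c, ⨆ μ, x.eigenspace μ = ⊤

variable {g : End k V} {ζ : k} {c : Submodule k (End k V)}

theorem mem_weightSpace {χ : c → k} {v : V} :
    v ∈ weightSpace c χ ↔ ∀ y : c, (y : End k V) v = χ y • v := by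
  simp [weightSpace, Submodule.mem_iInf]

theorem maxGenEigenspace_eq_eigenspace_of_iSup_eigenspace_eq_top {x : End k V}
    (hx : ⨆ μ, x.eigenspace μ = ⊤) (μ : k) : x.maxGenEigenspace μ = x.eigenspace μ :=
  (congrFun (((x.independent_maxGenEigenspace).le_iff_eq_of_iSup_eq_top hx).mp
    fun _ => End.eigenspace_le_maxGenEigenspace) μ).symm

namespace IsToralSubspace

theorem iSupIndep_weightSpace (hc : IsToralSubspace g ζ c) : iSupIndep (weightSpace c) :=
  (End.independent_iInf_maxGenEigenspace_of_forall_mapsTo (fun y : c => (y : End k V))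
    fun i j φ => End.mapsTo_maxGenEigenspace_of_comm (hc.commute j j.2 i i.2) φ).mono
    fun _ => iInf_mono fun _ => End.eigenspace_le_maxGenEigenspace

theorem iSup_weightSpace_eq_top [FiniteDimensional k V] (hc : IsToralSubspace g ζ c) :
    ⨆ χ, weightSpace c χ = ⊤ := by
  have eq (y : c) := maxGenEigenspace_eq_eigenspace_of_iSup_eigenspace_eq_top
    (hc.iSup_eigenspace_eq_top y y.2)
  have := End.iSup_iInf_maxGenEigenspace_eq_top_of_iSup_maxGenEigenspace_eq_top_of_commute
    (fun y : c => (y : End k V)) (fun i j _ => hc.commute i i.2 j j.2) fun y => by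
      simpa only [eq] using hc.iSup_eigenspace_eq_top y y.2
  simpa only [weightSpace, eq] using this

theorem weightSpace_le_comap_pow (hc : IsToralSubspace g ζ c) (hζ : ζ ≠ 0) (χ : c → k) (l : ℕ) :
    weightSpace c χ ≤ (weightSpace c (ζ⁻¹ ^ l • χ)).comap (g ^ l) := by
  induction l with
  | zero => simp [End.one_eq_id]
  | succ l ih =>
    intro v hv
    refine mem_weightSpace.mpr fun y => ?_
    have step := mem_weightSpace.mp (ih hv) y
    have twist := LinearMap.congr_fun (hc.mul_eq_smul_mul y y.2) ((g ^ l) v)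
    simp only [End.mul_apply, LinearMap.smul_apply, step, map_smul] at twist
    rw [pow_succ', End.mul_apply, ← inv_smul_eq_iff₀ hζ |>.mpr twist, smul_smul, pow_succ']
    simp [mul_assoc]

theorem exists_disjoint_translates [FiniteDimensional k V] {m : ℕ} [NeZero m]
    (hζ : IsPrimitiveRoot ζ m) (hc : IsToralSubspace g ζ c) :
    ∃ S : Set V, (∀ v ∈ S, ∃ χ, v ∈ weightSpace c χ) ∧
      (∃ U' : Submodule k V, Disjoint (Submodule.span k S) U' ∧
        ∀ l, 0 < l → l < m → Submodule.span k S ≤ U'.comap (g ^ l)) ∧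
      (⨆ l, (Submodule.span k S).comap (g ^ l)) ⊔ weightSpace c 0 = ⊤ := by
  have hζ0 : ζ ≠ 0 := hζ.ne_zero (NeZero.ne m)
  obtain ⟨R, exists_mem, notMem⟩ := exists_orbit_representatives_pow_smul (M := c → k) hζ.inv
  have span_eq : Submodule.span k (⋃ χ ∈ R \ {0}, (weightSpace c χ : Set V)) =
      ⨆ χ ∈ R \ {0}, weightSpace c χ := by
    simp only [Submodule.span_iUnion, Submodule.span_eq]
  refine ⟨⋃ χ ∈ R \ {0}, weightSpace c χ, fun v hv => ?_, ?_, ?_⟩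
  · obtain ⟨χ, -, hχ⟩ := Set.mem_iUnion₂.mp hv
    exact ⟨χ, hχ⟩
  · rw [span_eq]
    refine ⟨⨆ χ ∈ (R \ {0})ᶜ, weightSpace c χ,
      hc.iSupIndep_weightSpace.disjoint_biSup_biSup disjoint_compl_right, fun l hl hlm =>
      iSup₂_le fun χ hχ => (hc.weightSpace_le_comap_pow hζ0 χ l).trans (Submodule.comap_mono ?_)⟩
    exact le_biSup (weightSpace c) fun h => notMem χ hχ.1 hχ.2 l hl hlm h.1
  · rw [span_eq, eq_top_iff, ← hc.iSup_weightSpace_eq_top]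
    refine iSup_le fun χ => ?_
    rcases eq_or_ne χ 0 with rfl | hχ
    · exact le_sup_right
    obtain ⟨l, hl⟩ := exists_mem χ
    have ne_zero : ζ⁻¹ ^ l • χ ≠ 0 := smul_ne_zero (pow_ne_zero l (inv_ne_zero hζ0)) hχ
    refine le_sup_of_le_left (le_iSup_of_le l ((hc.weightSpace_le_comap_pow hζ0 χ l).trans
      (Submodule.comap_mono ?_)))
    exact le_biSup (weightSpace c) (show ζ⁻¹ ^ l • χ ∈ R \ {0} from ⟨hl, ne_zero⟩)

theorem weightSpace_zero_mem_invtSubmodule (hc : IsToralSubspace g ζ c) (hζ : ζ ≠ 0) :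
    weightSpace c 0 ∈ g.invtSubmodule := by
  simpa [End.mem_invtSubmodule] using hc.weightSpace_le_comap_pow hζ 0 1

end IsToralSubspace

end Toral

section EigenFrame

variable {k V : Type*} [Field k] [AddCommGroup V] [Module k V]

/-- A choice of an ordered basis in every eigenspace of `g`. -/
abbrev EigenFrame (g : End k V) : Type _ :=
  ∀ μ : k, Basis (Fin (finrank k (g.eigenspace μ))) k (g.eigenspace μ)

namespace EigenFrame

variable {g : End k V}

/-- The `j`-th vector of a frame in the `μ`-eigenspace, and `0` for `j` beyond the dimension, so
that vectors in eigenspaces of different dimensions can be compared index by index. -/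
noncomputable def vec (b : EigenFrame g) (μ : k) (j : ℕ) : V :=
  if h : j < finrank k (g.eigenspace μ) then b μ ⟨j, h⟩ else 0

/-- The endomorphisms which, for some scalars `t j` independent of `μ`, map the `j`-th vector of
the `μ`-eigenspace to `t j` times the `j`-th vector of the `ζ * μ`-eigenspace: they act on the
vectors of each index `j` by a multiple of a cyclic shift. -/
def cyclicSubspace (ζ : k) (b : EigenFrame g) : Submodule k (End k V) where
  carrier := {x | ∃ t : ℕ → k, ∀ μ j, x (b.vec μ j) = t j • b.vec (ζ * μ) j}
  add_mem' := by
    rintro x y ⟨t, ht⟩ ⟨s, hs⟩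
    exact ⟨t + s, fun μ j => by simp [ht, hs, add_smul]⟩
  zero_mem' := ⟨0, fun μ j => by simp⟩
  smul_mem' := by
    rintro r x ⟨t, ht⟩
    exact ⟨r • t, fun μ j => by simp [ht, mul_smul]⟩

theorem vec_coe (b : EigenFrame g) (μ : k) (j : Fin (finrank k (g.eigenspace μ))) :
    b.vec μ j = b μ j :=
  dif_pos j.isLt

theorem vec_eq_zero (b : EigenFrame g) {μ : k} {j : ℕ} (hj : finrank k (g.eigenspace μ) ≤ j) :
    b.vec μ j = 0 :=
  dif_neg hj.not_gt

theorem vec_mem_eigenspace (b : EigenFrame g) (μ : k) (j : ℕ) : b.vec μ j ∈ g.eigenspace μ := by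
  rw [vec]
  split_ifs with h
  exacts [(b μ ⟨j, h⟩).2, zero_mem _]

theorem apply_vec (b : EigenFrame g) (μ : k) (j : ℕ) : g (b.vec μ j) = μ • b.vec μ j :=
  End.mem_eigenspace_iff.mp (b.vec_mem_eigenspace μ j)

theorem vec_eq_zero_of_pow_ne (b : EigenFrame g) {m : ℕ} {a : k} (hg : g ^ m = a • (1 : End k V))
    {μ : k} (hμ : μ ^ m ≠ a) (j : ℕ) : b.vec μ j = 0 := by
  have h := pow_apply_of_mem_eigenspace (b.vec_mem_eigenspace μ j) m
  rw [hg, LinearMap.smul_apply, End.one_apply, ← sub_eq_zero, ← sub_smul] at h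
  exact (smul_eq_zero.mp h).resolve_left (sub_ne_zero.mpr hμ.symm)

theorem exists_basis_eq_vec (b : EigenFrame g) (hg : ⨆ μ, g.eigenspace μ = ⊤) :
    ∃ B : Basis (Σ μ : k, Fin (finrank k (g.eigenspace μ))) k V, ∀ p, B p = b.vec p.1 p.2 := by
  classical
  have internal : DirectSum.IsInternal g.eigenspace :=
    DirectSum.isInternal_submodule_of_iSupIndep_of_iSup_eq_top g.eigenspaces_iSupIndep hg
  exact ⟨internal.collectedBasis b, fun p => by rw [internal.collectedBasis_coe, vec_coe]⟩

theorem end_ext (b : EigenFrame g) (hg : ⨆ μ, g.eigenspace μ = ⊤)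
    {x y : End k V} (h : ∀ μ j, x (b.vec μ j) = y (b.vec μ j)) : x = y := by
  obtain ⟨B, hB⟩ := b.exists_basis_eq_vec hg
  exact B.ext fun p => by rw [hB, h]

theorem exists_equiv_apply_vec (b₁ b₂ : EigenFrame g) (hg : ⨆ μ, g.eigenspace μ = ⊤) :
    ∃ e : V ≃ₗ[k] V, ∀ μ j, e (b₁.vec μ j) = b₂.vec μ j := by
  obtain ⟨B₁, hB₁⟩ := b₁.exists_basis_eq_vec hg
  obtain ⟨B₂, hB₂⟩ := b₂.exists_basis_eq_vec hg
  refine ⟨B₁.equiv B₂ (Equiv.refl _), fun μ j => ?_⟩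
  rcases lt_or_ge j (finrank k (g.eigenspace μ)) with hj | hj
  · rw [← hB₁ ⟨μ, j, hj⟩, ← hB₂ ⟨μ, j, hj⟩, Basis.equiv_apply, Equiv.refl_apply]
  · rw [b₁.vec_eq_zero hj, b₂.vec_eq_zero hj, map_zero]

theorem isToralSubspace_cyclicSubspace (b : EigenFrame g)
    (hg : ⨆ μ, g.eigenspace μ = ⊤) {m : ℕ} [NeZero m] {ζ : k} (hζ : IsPrimitiveRoot ζ m) :
    IsToralSubspace g ζ (b.cyclicSubspace ζ) where
  mul_eq_smul_mul := by
    rintro x ⟨t, ht⟩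
    refine b.end_ext hg fun μ j => ?_
    simp only [End.mul_apply, LinearMap.smul_apply, ht, apply_vec, map_smul, smul_smul]
    ring_nf
  commute := by
    rintro x ⟨t, ht⟩ y ⟨s, hs⟩
    refine b.end_ext hg fun μ j => ?_
    simp only [End.mul_apply, ht, hs, map_smul, smul_smul, mul_comm]
  iSup_eigenspace_eq_top := by
    rintro x ⟨t, ht⟩
    have pow_apply (l : ℕ) (μ : k) (j : ℕ) :
        (x ^ l) (b.vec μ j) = t j ^ l • b.vec (ζ ^ l * μ) j := by
      induction l with
      | zero => simp
      | succ l ih =>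
        rw [pow_succ', End.mul_apply, ih, map_smul, ht, smul_smul, ← pow_succ, ← mul_assoc,
          ← pow_succ']
    obtain ⟨B, hB⟩ := b.exists_basis_eq_vec hg
    rw [eq_top_iff, ← B.span_eq, Submodule.span_le]
    rintro _ ⟨⟨μ, j⟩, rfl⟩
    rw [hB]
    by_cases htj : t j = 0
    · refine Submodule.mem_iSup_of_mem 0 (End.mem_eigenspace_iff.mpr ?_)
      rw [ht, htj, zero_smul, zero_smul]
    · refine mem_iSup_eigenspace_of_pow_apply_eq hζ htj ?_
      rw [pow_apply, hζ.pow_eq_one, one_mul]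

theorem exists_unit_commute_conj_cyclicSubspace (b₁ b₂ : EigenFrame g)
    (hg : ⨆ μ, g.eigenspace μ = ⊤) (ζ : k) :
    ∃ h : (End k V)ˣ, Commute ↑h g ∧
      ∀ x, x ∈ b₁.cyclicSubspace ζ ↔ ↑h * x * ↑h⁻¹ ∈ b₂.cyclicSubspace ζ := by
  obtain ⟨e, he⟩ := b₁.exists_equiv_apply_vec b₂ hg
  have he_symm (μ : k) (j : ℕ) : e.symm (b₂.vec μ j) = b₁.vec μ j := by
    rw [← he, e.symm_apply_apply]
  let h : (End k V)ˣ := LinearMap.GeneralLinearGroup.ofLinearEquiv e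
  refine ⟨h, b₁.end_ext hg fun μ j => ?_, fun x => exists_congr fun t =>
    forall₂_congr fun μ j => ?_⟩
  · change e (g _) = g (e _)
    rw [apply_vec, map_smul, he, apply_vec]
  · change _ ↔ e (x (e.symm _)) = _
    rw [he_symm, ← e.injective.eq_iff, map_smul, he]

end EigenFrame

end EigenFrame

section NormalForm

variable {k V : Type*} [Field k] [AddCommGroup V] [Module k V] [FiniteDimensional k V]
  {g : End k V} {ζ : k} {m : ℕ}

theorem exists_basis_eigenspace_extending_eigenProj {μ : k} (hm : (m : k) ≠ 0) (hμ : μ ≠ 0)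
    (hg : g ^ m = μ ^ m • (1 : End k V)) {U' W : Submodule k V} (hW : W ∈ g.invtSubmodule) {q : ℕ}
    {u : Fin q → V} (hu : LinearIndependent k u)
    (hUU' : Disjoint (Submodule.span k (Set.range u)) U')
    (hU : ∀ l, 0 < l → l < m → Submodule.span k (Set.range u) ≤ U'.comap (g ^ l))
    (hUW : (⨆ l, (Submodule.span k (Set.range u)).comap (g ^ l)) ⊔ W = ⊤) :
    ∃ (hq : q ≤ finrank k (g.eigenspace μ))
      (b : Basis (Fin (finrank k (g.eigenspace μ))) k (g.eigenspace μ)),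
      (∀ i, (b (Fin.castLE hq i) : V) = eigenProj g m μ (u i)) ∧
        ∀ j : Fin (finrank k (g.eigenspace μ)), q ≤ j → (b j : V) ∈ W := by
  let P : V →ₗ[k] g.eigenspace μ := (eigenProj g m μ).codRestrict (g.eigenspace μ) fun v =>
    eigenProj_apply_mem_eigenspace hμ (by simp [hg])
  have indep : LinearIndependent k (P ∘ u) := hu.map <| by
    rw [LinearMap.ker_codRestrict]
    exact disjoint_ker_eigenProj hm hUU' hU μ
  have span : Submodule.span k (Set.range (P ∘ u) ∪ W.comap (g.eigenspace μ).subtype) = ⊤ := by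
    rw [Submodule.span_union, Submodule.span_eq, Set.range_comp, Submodule.span_image, eq_top_iff]
    intro v _
    obtain ⟨_, ⟨y, hy, rfl⟩, w, hw, hv⟩ :=
      Submodule.mem_sup.mp (eigenspace_le_map_eigenProj_sup hm hμ hg hW hUW v.2)
    have hvw : ((v - P y : g.eigenspace μ) : V) = w := by
      rw [Submodule.coe_sub, ← hv]
      exact add_sub_cancel_left _ _
    refine Submodule.mem_sup.mpr ⟨P y, Submodule.mem_map_of_mem hy, v - P y, ?_,
      add_sub_cancel _ _⟩
    rwa [Submodule.mem_comap, Submodule.subtype_apply, hvw]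
  obtain ⟨hq, b, b_castLE, b_mem⟩ := exists_basis_fin_castLE_eq_and_mem indep span
  exact ⟨hq, b, fun i => congrArg Subtype.val (b_castLE i), b_mem⟩

theorem IsToralSubspace.exists_eigenFrame [NeZero m] (hζ : IsPrimitiveRoot ζ m) {α : k}
    (hα : α ≠ 0) (hg : g ^ m = α ^ m • (1 : End k V)) {c : Submodule k (End k V)}
    (hc : IsToralSubspace g ζ c) :
    ∃ (q : ℕ) (u : Fin q → V) (b : EigenFrame g), (∀ i, ∃ χ, u i ∈ weightSpace c χ) ∧
      ∀ μ, μ ^ m = α ^ m → (∀ i : Fin q, b.vec μ i = eigenProj g m μ (u i)) ∧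
        ∀ j, q ≤ j → b.vec μ j ∈ weightSpace c 0 := by
  classical
  have hm : (m : k) ≠ 0 := hζ.neZero'.out
  obtain ⟨S, S_weight, ⟨U', hUU', hU⟩, hUW⟩ := hc.exists_disjoint_translates hζ
  obtain ⟨u, huS, span_u, indep⟩ := Submodule.exists_fun_fin_finrank_span_eq k S
  simp only [← span_u] at hUU' hU hUW
  have basis (μ : k) : ∃ b : Basis (Fin (finrank k (g.eigenspace μ))) k (g.eigenspace μ),
      μ ^ m = α ^ m → ∃ hq, (∀ i, (b (Fin.castLE hq i) : V) = eigenProj g m μ (u i)) ∧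
        ∀ j : Fin (finrank k (g.eigenspace μ)), finrank k (Submodule.span k S) ≤ j →
          (b j : V) ∈ weightSpace c 0 := by
    by_cases h : μ ^ m = α ^ m
    · have hμ : μ ≠ 0 := (pow_ne_zero_iff (NeZero.ne m)).mp (h ▸ pow_ne_zero m hα)
      obtain ⟨hq, b, hb⟩ := exists_basis_eigenspace_extending_eigenProj hm hμ (h ▸ hg)
        (hc.weightSpace_zero_mem_invtSubmodule (hζ.ne_zero (NeZero.ne m))) indep hUU' hU hUW
      exact ⟨b, fun _ => ⟨hq, hb⟩⟩
    · exact ⟨finBasis k _, fun h' => absurd h' h⟩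
  choose b hb using basis
  refine ⟨_, u, b, fun i => S_weight _ (huS i), fun μ hμ => ?_⟩
  obtain ⟨hq, b_castLE, b_mem⟩ := hb μ hμ
  refine ⟨fun i => ?_, fun j hj => ?_⟩
  · rw [← b_castLE, ← EigenFrame.vec_coe b, Fin.val_castLE]
  · rcases lt_or_ge j (finrank k (g.eigenspace μ)) with h | h
    · exact EigenFrame.vec_coe b μ ⟨j, h⟩ ▸ b_mem ⟨j, h⟩ hj
    · exact EigenFrame.vec_eq_zero b h ▸ zero_mem _

theorem IsToralSubspace.exists_le_cyclicSubspace [NeZero m] (hζ : IsPrimitiveRoot ζ m) {α : k}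
    (hα : α ≠ 0) (hg : g ^ m = α ^ m • (1 : End k V)) {c : Submodule k (End k V)}
    (hc : IsToralSubspace g ζ c) : ∃ b : EigenFrame g, c ≤ b.cyclicSubspace ζ := by
  obtain ⟨q, u, b, u_weight, hb⟩ := hc.exists_eigenFrame hζ hα hg
  choose χ hχ using u_weight
  refine ⟨b, fun x hx => ⟨fun j => if h : j < q then χ ⟨j, h⟩ ⟨x, hx⟩ else 0, fun μ j => ?_⟩⟩
  beta_reduce
  have shift : (ζ * μ) ^ m = μ ^ m := by rw [mul_pow, hζ.pow_eq_one, one_mul]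
  by_cases hμ : μ ^ m = α ^ m
  · split_ifs with hj
    · have intertwine := LinearMap.congr_fun
        (semiconjBy_eigenProj (hζ.ne_zero (NeZero.ne m)) (hc.mul_eq_smul_mul x hx) m μ).eq
        (u ⟨j, hj⟩)
      rw [End.mul_apply, End.mul_apply, mem_weightSpace.mp (hχ ⟨j, hj⟩) ⟨x, hx⟩,
        map_smul, ← (hb μ hμ).1, ← (hb _ (shift.trans hμ)).1] at intertwine
      exact intertwine
    · have killed := mem_weightSpace.mp ((hb μ hμ).2 j (not_lt.mp hj)) ⟨x, hx⟩
      rwa [Pi.zero_apply, zero_smul, ← zero_smul k] at killed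
  · rw [b.vec_eq_zero_of_pow_ne hg hμ, b.vec_eq_zero_of_pow_ne hg (shift ▸ hμ), map_zero,
      smul_zero]

theorem exists_unit_commute_conj_of_maximal_isToralSubspace [NeZero m] (hζ : IsPrimitiveRoot ζ m)
    {α : k} (hα : α ≠ 0) (hg : g ^ m = α ^ m • (1 : End k V)) {c₁ c₂ : Submodule k (End k V)}
    (hc₁ : Maximal (IsToralSubspace g ζ) c₁) (hc₂ : Maximal (IsToralSubspace g ζ) c₂) :
    ∃ h : (End k V)ˣ, Commute ↑h g ∧ ∀ x, x ∈ c₁ ↔ ↑h * x * ↑h⁻¹ ∈ c₂ := by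
  have hg_diag : ⨆ μ, g.eigenspace μ = ⊤ := eq_top_iff.mpr fun v _ =>
    mem_iSup_eigenspace_of_pow_apply_eq hζ hα (by rw [hg]; rfl)
  obtain ⟨b₁, hb₁⟩ := hc₁.prop.exists_le_cyclicSubspace hζ hα hg
  obtain ⟨b₂, hb₂⟩ := hc₂.prop.exists_le_cyclicSubspace hζ hα hg
  rw [hc₁.eq_of_le (b₁.isToralSubspace_cyclicSubspace hg_diag hζ) hb₁,
    hc₂.eq_of_le (b₂.isToralSubspace_cyclicSubspace hg_diag hζ) hb₂]
  exact b₁.exists_unit_commute_conj_cyclicSubspace b₂ hg_diag ζ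

end NormalForm

section Diagonalizable

variable {k V : Type*} [Field k] [AddCommGroup V] [Module k V]

theorem iSup_eigenspace_eq_top_of_semiconjBy {x y s : End k V} (hs : Function.Surjective s)
    (hxy : SemiconjBy s y x) (hy : ⨆ μ, y.eigenspace μ = ⊤) : ⨆ μ, x.eigenspace μ = ⊤ := by
  rw [eq_top_iff, ← LinearMap.range_eq_top.mpr hs, LinearMap.range_eq_map, ← hy,
    Submodule.map_iSup]
  refine iSup_mono fun μ => Submodule.map_le_iff_le_comap.mpr fun v hv => ?_
  rw [Submodule.mem_comap, End.mem_eigenspace_iff, ← End.mul_apply, ← hxy.eq, End.mul_apply,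
    End.mem_eigenspace_iff.mp hv, map_smul]

theorem exists_basis_apply_eq_smul_of_iSup_eigenspace_eq_top [FiniteDimensional k V]
    {x : End k V} (hx : ⨆ μ, x.eigenspace μ = ⊤) :
    ∃ b : Basis (Fin (finrank k V)) k V, ∀ i, ∃ μ : k, x (b i) = μ • b i := by
  obtain ⟨-, b, -, hb⟩ := exists_basis_fin_castLE_eq_and_mem
    (linearIndependent_empty_type (R := k) (v := (Fin.elim0 : Fin 0 → V)))
    (s := ⋃ μ, (x.eigenspace μ : Set V)) (by
      simp only [Submodule.span_union, Submodule.span_iUnion, Submodule.span_eq, hx, sup_top_eq])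
  refine ⟨b, fun i => ?_⟩
  obtain ⟨μ, hμ⟩ := Set.mem_iUnion.mp (hb i (Nat.zero_le i))
  exact ⟨μ, End.mem_eigenspace_iff.mp hμ⟩

end Diagonalizable

section MatrixBridge

variable {k N : Type*} [Field k] [Fintype N] [DecidableEq N]

theorem isSemisimpleMat_iff_iSup_eigenspace_eq_top {x : Matrix N N k} :
    IsSemisimpleMat x ↔ ⨆ μ, End.eigenspace (Matrix.toLinAlgEquiv' x) μ = ⊤ := by
  constructor
  · rintro ⟨P, hP, hd⟩
    have intertwine : x * P⁻¹ = P⁻¹ * Matrix.diagonal (P * x * P⁻¹).diag := by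
      rw [hd.diagonal_diag, ← Matrix.mul_assoc, ← Matrix.mul_assoc, Matrix.nonsing_inv_mul _ hP,
        Matrix.one_mul]
    have surjective : Function.Surjective (Matrix.toLinAlgEquiv' P⁻¹) := fun v =>
      ⟨P.mulVec v, by simp [Matrix.nonsing_inv_mul _ hP]⟩
    refine iSup_eigenspace_eq_top_of_semiconjBy surjective ?_
      (Matrix.iSup_eigenspace_toLin'_diagonal_eq_top (P * x * P⁻¹).diag)
    have := congrArg Matrix.toLinAlgEquiv' intertwine
    rw [map_mul, map_mul] at this
    exact this.symm
  · intro hx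
    obtain ⟨b₀, hb₀⟩ := exists_basis_apply_eq_smul_of_iSup_eigenspace_eq_top hx
    let b := b₀.reindex (Fintype.equivFinOfCardEq (finrank_fintype_fun_eq_card k).symm).symm
    have hb (i : N) : ∃ μ : k, Matrix.toLin' x (b i) = μ • b i := by
      rw [Basis.reindex_apply]
      exact hb₀ _
    let P := b.toMatrix (Pi.basisFun k N)
    have mul_eq_one : P * (Pi.basisFun k N).toMatrix b = 1 := Basis.toMatrix_mul_toMatrix_flip _ _
    refine ⟨P, Matrix.isUnit_det_of_right_inverse mul_eq_one, fun i j hij => ?_⟩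
    obtain ⟨μ, hμ⟩ := hb j
    have conj : P * x * P⁻¹ = LinearMap.toMatrix b b (Matrix.toLin' x) := by
      rw [Matrix.inv_eq_right_inv mul_eq_one,
        ← basis_toMatrix_mul_linearMap_toMatrix_mul_basis_toMatrix b (Pi.basisFun k N) b
          (Pi.basisFun k N), LinearMap.toMatrix_eq_toMatrix', LinearMap.toMatrix'_toLin']
    rw [conj, LinearMap.toMatrix_apply, hμ, map_smul, b.repr_self, Finsupp.smul_apply,
      Finsupp.single_eq_of_ne hij, smul_zero]

variable {ζ : k} {m : ℕ} {g : Matrix N N k}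

theorem isToralSubspace_map_toLinAlgEquiv'_iff (hg : IsUnit g.det)
    {c : Submodule k (Matrix N N k)} :
    IsToralSubspace (Matrix.toLinAlgEquiv' g) ζ (c.map Matrix.toLinAlgEquiv'.toLinearMap) ↔
      (c : Set (Matrix N N k)) ⊆ {x | g * x * g⁻¹ = ζ • x} ∧
        (∀ x ∈ c, ∀ y ∈ c, x * y = y * x) ∧ ∀ x ∈ c, IsSemisimpleMat x := by
  have eigen_iff (x : Matrix N N k) : Matrix.toLinAlgEquiv' g * Matrix.toLinAlgEquiv' x =
      ζ • (Matrix.toLinAlgEquiv' x * Matrix.toLinAlgEquiv' g) ↔ g * x * g⁻¹ = ζ • x := by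
    rw [← map_mul, ← map_mul, ← map_smul, EmbeddingLike.apply_eq_iff_eq]
    refine ⟨fun h => ?_, fun h => ?_⟩
    · rw [h, Matrix.smul_mul, Matrix.mul_nonsing_inv_cancel_right _ _ hg]
    · rw [← Matrix.smul_mul, ← h, Matrix.nonsing_inv_mul_cancel_right _ _ hg]
  have commute_iff (x y : Matrix N N k) :
      Commute (Matrix.toLinAlgEquiv' x) (Matrix.toLinAlgEquiv' y) ↔ x * y = y * x := by
    rw [Commute, SemiconjBy, ← map_mul, ← map_mul, EmbeddingLike.apply_eq_iff_eq]
  constructor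
  · intro h
    have mem {x} (hx : x ∈ c) := Submodule.mem_map_of_mem (f := (Matrix.toLinAlgEquiv'
      (R := k) (n := N)).toLinearMap) hx
    exact ⟨fun x hx => (eigen_iff x).mp (h.mul_eq_smul_mul _ (mem hx)),
      fun x hx y hy => (commute_iff x y).mp (h.commute _ (mem hx) _ (mem hy)),
      fun x hx => isSemisimpleMat_iff_iSup_eigenspace_eq_top.mpr
        (h.iSup_eigenspace_eq_top _ (mem hx))⟩
  · rintro ⟨eigen, commute, semisimple⟩
    refine ⟨?_, ?_, ?_⟩
    · rintro _ ⟨x, hx, rfl⟩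
      exact (eigen_iff x).mpr (eigen hx)
    · rintro _ ⟨x, hx, rfl⟩ _ ⟨y, hy, rfl⟩
      exact (commute_iff x y).mpr (commute x hx y hy)
    · rintro _ ⟨x, hx, rfl⟩
      exact isSemisimpleMat_iff_iSup_eigenspace_eq_top.mp (semisimple x hx)

theorem IsCartanSubspace.maximal_isToralSubspace (hg : IsUnit g.det)
    {c : Submodule k (Matrix N N k)} (hc : IsCartanSubspace {x | g * x * g⁻¹ = ζ • x} c) :
    Maximal (IsToralSubspace (Matrix.toLinAlgEquiv' g) ζ)
      (c.map Matrix.toLinAlgEquiv'.toLinearMap) := by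
  obtain ⟨eigen, commute, semisimple, maximal⟩ := hc
  refine ⟨(isToralSubspace_map_toLinAlgEquiv'_iff hg).mpr ⟨eigen, commute, semisimple⟩,
    fun c' hc' hle => ?_⟩
  obtain ⟨d, rfl⟩ := Submodule.map_surjective_of_surjective
    (f := (Matrix.toLinAlgEquiv' (R := k) (n := N)).toLinearMap)
    Matrix.toLinAlgEquiv'.surjective c'
  have hcd : c ≤ d := (Submodule.map_le_map_iff_of_injective
    (f := (Matrix.toLinAlgEquiv' (R := k) (n := N)).toLinearMap)
    Matrix.toLinAlgEquiv'.injective c d).mp hle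
  rw [maximal d ((isToralSubspace_map_toLinAlgEquiv'_iff hg).mp hc') hcd]

theorem exists_ne_zero_pow_eq_smul_one {A : Type*} [Ring A] [Algebra k A] {g : A} (hg : IsUnit g)
    (hm : m ≠ 0) {α : k} (hα : g ^ m = α ^ m • 1) : ∃ β : k, β ≠ 0 ∧ g ^ m = β ^ m • 1 := by
  rcases eq_or_ne α 0 with rfl | h
  · rw [zero_pow hm, zero_smul] at hα
    have : Subsingleton A := subsingleton_of_zero_eq_one (isUnit_zero_iff.mp (hα ▸ hg.pow m))
    exact ⟨1, one_ne_zero, Subsingleton.elim _ _⟩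
  · exact ⟨α, h, hα⟩

theorem IsCartanSubspace.exists_unit_commute_conj [NeZero m] (hζ : IsPrimitiveRoot ζ m)
    (hg : IsUnit g.det) (hscal : ∃ α : k, g ^ m = α ^ m • (1 : Matrix N N k))
    {c₁ c₂ : Submodule k (Matrix N N k)}
    (h₁ : IsCartanSubspace {x | g * x * g⁻¹ = ζ • x} c₁)
    (h₂ : IsCartanSubspace {x | g * x * g⁻¹ = ζ • x} c₂) :
    ∃ h : (Matrix N N k)ˣ, Commute (h : Matrix N N k) g ∧
      ∀ x, x ∈ c₁ ↔ (h : Matrix N N k) * x * ((h⁻¹ : (Matrix N N k)ˣ) : Matrix N N k) ∈ c₂ := by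
  obtain ⟨α₀, hα₀⟩ := hscal
  obtain ⟨α, hα, hgm⟩ := exists_ne_zero_pow_eq_smul_one ((Matrix.isUnit_iff_isUnit_det g).mpr hg)
    (NeZero.ne m) hα₀
  obtain ⟨h, hcomm, hconj⟩ := exists_unit_commute_conj_of_maximal_isToralSubspace hζ hα
    (g := Matrix.toLinAlgEquiv' g) (by rw [← map_pow, hgm, map_smul, map_one])
    (h₁.maximal_isToralSubspace hg) (h₂.maximal_isToralSubspace hg)
  let φ := Matrix.toLinAlgEquiv' (R := k) (n := N)
  obtain ⟨h, rfl⟩ := (Units.mapEquiv φ.toMulEquiv).surjective h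
  refine ⟨h, ?_, fun x => ?_⟩
  · refine Matrix.toLinAlgEquiv'.injective ?_
    rw [map_mul, map_mul]
    exact hcomm
  · have mem_iff (c : Submodule k (Matrix N N k)) (y : Matrix N N k) :
        φ y ∈ c.map φ.toLinearMap ↔ y ∈ c := φ.injective.mem_set_image (s := c)
    rw [← mem_iff c₁, ← mem_iff c₂, map_mul, map_mul]
    exact hconj (φ x)

end MatrixBridge

theorem stmt19_general {k : Type*} [Field k] {N : Type*} [Fintype N] [DecidableEq N]
    (m : ℕ) (hm : 0 < m) (ζ : k) (hζ : IsPrimitiveRoot ζ m)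
    (g : Matrix N N k) (hg : IsUnit g.det)
    (hscal : ∃ α : k, g ^ m = α ^ m • (1 : Matrix N N k))
    (c₁ c₂ : Submodule k (Matrix N N k))
    (h₁ : IsCartanSubspace {x | g * x * g⁻¹ = ζ • x} c₁)
    (h₂ : IsCartanSubspace {x | g * x * g⁻¹ = ζ • x} c₂) :
    ∃ h : Matrix N N k, IsUnit h.det ∧ h * g = g * h ∧
      {y | ∃ x ∈ c₁, y = h * x * h⁻¹} = (c₂ : Set (Matrix N N k)) := by
  have : NeZero m := ⟨hm.ne'⟩
  obtain ⟨h, hcomm, hconj⟩ := h₁.exists_unit_commute_conj hζ hg hscal h₂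
  refine ⟨h, (Matrix.isUnit_iff_isUnit_det _).mp h.isUnit, hcomm, Set.ext fun y => ?_⟩
  rw [← Matrix.coe_units_inv]
  constructor
  · rintro ⟨x, hx, rfl⟩
    exact (hconj x).mp hx
  · intro hy
    let x : Matrix N N k := ((h⁻¹ : (Matrix N N k)ˣ) : Matrix N N k) * y * h
    have hx : y = h * x * ((h⁻¹ : (Matrix N N k)ˣ) : Matrix N N k) := by simp [x, mul_assoc]
    exact ⟨x, (hconj x).mpr (hx ▸ hy), hx⟩

/-- let `g ∈ GL(n,k)` with `g^m` scalar and `ζ` a primitive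
`m`-th root of unity; set `𝔤(1) = {x : g·x·g⁻¹ = ζ·x}` and
`H = Z_{GL(n,k)}(g)`.  Then any two Cartan subspaces of `𝔤(1)` are conjugate
by an element of `H`. -/
theorem stmt19 {k : Type*} [Field k] [IsAlgClosed k]
    (m : ℕ) (hm : 0 < m) (ζ : k) (hζ : IsPrimitiveRoot ζ m)
    (n : ℕ) (g : Matrix (Fin n) (Fin n) k) (hg : IsUnit g.det)
    (hscal : ∃ a : k, g ^ m = a • (1 : Matrix (Fin n) (Fin n) k))
    (c₁ c₂ : Submodule k (Matrix (Fin n) (Fin n) k))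
    (h₁ : IsCartanSubspace {x | g * x * g⁻¹ = ζ • x} c₁)
    (h₂ : IsCartanSubspace {x | g * x * g⁻¹ = ζ • x} c₂) :
    ∃ h : Matrix (Fin n) (Fin n) k, IsUnit h.det ∧ h * g = g * h ∧
      {y | ∃ x ∈ c₁, y = h * x * h⁻¹} = (c₂ : Set (Matrix (Fin n) (Fin n) k)) := by
  obtain ⟨a, ha⟩ := hscal
  obtain ⟨α, rfl⟩ := IsAlgClosed.exists_pow_nat_eq a hm
  exact stmt19_general m hm ζ hζ g hg ⟨α, ha⟩ c₁ c₂ h₁ h₂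
end
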